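/- Let k be a field, let Q₁, Q₂ be homogeneous degree-2 polynomials in k[u,v], and for i = 1,2,3 let R_i(s,t) = e_{2,i}s² + e_{1,i}st + e_{0,i}t² be quadratic forms in two variables over k. Set P_i(u,v) = R_i(Q₁(u,v), Q₂(u,v)) (a homogeneous degree-4 polynomial) and let N be the 3×3 matrix whose i-th column is (e_{2,i}, e_{1,i}, e_{0,i})ᵀ. Then det A_{P₁,P₂,P₃} = Res(Q₁,Q₂)³ · (det N)². -/

import Mathlib

open MvPolynomial

noncomputable section

/-- The coefficient of `u^i v^j` in a polynomial in `k[u,v]`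
(variables `X 0 = u`, `X 1 = v`). -/
def coeffUV {k : Type*} [Field k] (i j : ℕ) (P : MvPolynomial (Fin 2) k) : k :=
  MvPolynomial.coeff (Finsupp.single 0 i + Finsupp.single 1 j) P

/-- For homogeneous degree-4 polynomials `P₁, P₂, P₃` in `k[u,v]`, the `6×6` matrix
whose columns are the coefficient vectors of `u·P₁, v·P₁, u·P₂, v·P₂, u·P₃, v·P₃`
with respect to the basis `u⁵, u⁴v, u³v², u²v³, uv⁴, v⁵`. -/
def Amat {k : Type*} [Field k] (P₁ P₂ P₃ : MvPolynomial (Fin 2) k) :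
    Matrix (Fin 6) (Fin 6) k :=
  Matrix.of fun i j =>
    coeffUV (5 - (i : ℕ)) (i : ℕ)
      ((![X 0 * P₁, X 1 * P₁, X 0 * P₂, X 1 * P₂, X 0 * P₃, X 1 * P₃] :
          Fin 6 → MvPolynomial (Fin 2) k) j)

/-- The resultant of two binary quadratic forms
`Q = q₂u² + q₁uv + q₀v²` and `Q' = q₂'u² + q₁'uv + q₀'v²`:
`(q₂q₀' − q₀q₂')² − (q₂q₁' − q₁q₂')(q₁q₀' − q₀q₁')`. -/
def Res2 {k : Type*} [Field k] (Q Q' : MvPolynomial (Fin 2) k) : k :=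
  (coeffUV 2 0 Q * coeffUV 0 2 Q' - coeffUV 0 2 Q * coeffUV 2 0 Q') ^ 2 -
    (coeffUV 2 0 Q * coeffUV 1 1 Q' - coeffUV 1 1 Q * coeffUV 2 0 Q') *
      (coeffUV 1 1 Q * coeffUV 0 2 Q' - coeffUV 0 2 Q * coeffUV 1 1 Q')

/-!
Taking linear combinations of the forms multiplies the matrix on the right by `N ⊗ I`, which
accounts for the factor in `det N` and reduces to the forms `f ^ (m - 1 - a) * g ^ a`, where `f`
and `g` are the dehomogenizations of `Q₁` and `Q₂`. For these one inducts on `m`: all columns but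
the last block are multiples of `f`, so the matrix for `m + 1` is the Sylvester matrix of `g ^ m`
and `f` times the block diagonal matrix built from the matrix for `m` and an identity. Hence each
step contributes `Res(g ^ m, f) = Res(g, f) ^ m`, and `1 + 2 = 3` is the exponent for quadratic
`Rᵢ`.
-/

open scoped Polynomial Kronecker

section CoeffMatrix

/-- The matrix whose columns are the coefficient vectors of the polynomials `p j`, truncated to
degrees below `N`. -/
def coeffMatrix {R ι : Type*} [Semiring R] (N : ℕ) (p : ι → R[X]) : Matrix (Fin N) ι R :=
  Matrix.of fun i j => (p j).coeff i

lemma coeffMatrix_mul {R ι κ : Type*} [CommSemiring R] [Fintype ι] (N : ℕ) (p : ι → R[X])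
    (A : Matrix ι κ R) :
    coeffMatrix N p * A = coeffMatrix N fun k => ∑ j, A j k • p j := by
  ext i k
  simp [coeffMatrix, Matrix.mul_apply, mul_comm]

lemma coeffMatrix_X_pow_mul_sum {R : Type*} [CommSemiring R] (N : ℕ) {l m n : ℕ}
    (q : Fin m → R[X]) (A : Matrix (Fin m) (Fin l) R) :
    (coeffMatrix N fun j : Fin (l * n) =>
      Polynomial.X ^ (j.modNat : ℕ) * ∑ i, A i j.divNat • q i) =
      (coeffMatrix N fun j : Fin (m * n) => Polynomial.X ^ (j.modNat : ℕ) * q j.divNat) *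
        (A ⊗ₖ (1 : Matrix (Fin n) (Fin n) R)).reindex finProdFinEquiv finProdFinEquiv := by
  have divNat_eq {r : ℕ} (a : Fin r) (b : Fin n) : (finProdFinEquiv (a, b)).divNat = a :=
    congrArg Prod.fst (finProdFinEquiv.symm_apply_apply (a, b))
  have modNat_eq {r : ℕ} (a : Fin r) (b : Fin n) : (finProdFinEquiv (a, b)).modNat = b :=
    congrArg Prod.snd (finProdFinEquiv.symm_apply_apply (a, b))
  rw [coeffMatrix_mul]
  congr 1
  ext1 j
  obtain ⟨⟨a, b⟩, rfl⟩ := finProdFinEquiv.surjective j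
  rw [← finProdFinEquiv.sum_comp, Fintype.sum_prod_type]
  simp [divNat_eq, modNat_eq, Matrix.one_apply, Finset.mul_sum, -finProdFinEquiv_apply_val]

variable {R : Type*} [CommRing R]

lemma sylvester_eq_coeffMatrix (f g : R[X]) {m n : ℕ} (hf : f.natDegree ≤ m)
    (hg : g.natDegree ≤ n) :
    f.sylvester g m n = coeffMatrix (m + n)
      (Fin.append (fun j : Fin m => Polynomial.X ^ (j : ℕ) * g)
        (fun j : Fin n => Polynomial.X ^ (j : ℕ) * f)) := by
  ext i j
  induction j using Fin.addCases <;>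
    simp only [Polynomial.sylvester, coeffMatrix, Matrix.of_apply, Fin.addCases_left,
      Fin.addCases_right, Fin.append_left, Fin.append_right, Polynomial.coeff_X_pow_mul',
      Set.mem_Icc] <;>
    split_ifs <;> first | rfl | omega |
      exact (Polynomial.coeff_eq_zero_of_natDegree_lt (by omega)).symm

lemma det_coeffMatrix_append (f g : R[X]) {m n : ℕ} (hf : f.natDegree ≤ n)
    (hg : g.natDegree ≤ m) (h : Fin m → R[X]) (hh : ∀ j, (h j).degree < m) :
    (coeffMatrix (m + n) (Fin.append (fun j => f * h j)
      (fun j : Fin n => Polynomial.X ^ (j : ℕ) * g))).det =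
      g.resultant f m n * (coeffMatrix m h).det := by
  have expand (j : Fin m) :
      ∑ i : Fin m, (h j).coeff i • (Polynomial.X ^ (i : ℕ) * f) = f * h j := by
    simp only [← smul_mul_assoc, ← Finset.sum_mul, Polynomial.smul_eq_C_mul]
    rw [Polynomial.sum_fin (fun i c => Polynomial.C c * Polynomial.X ^ i) (by simp) (hh j),
      Polynomial.sum_C_mul_X_pow_eq, mul_comm]
  have factor : coeffMatrix (m + n) (Fin.append (fun j => f * h j)
      (fun j : Fin n => Polynomial.X ^ (j : ℕ) * g)) =
      g.sylvester f m n *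
        (Matrix.fromBlocks (coeffMatrix m h) 0 0 1).reindex finSumFinEquiv finSumFinEquiv := by
    rw [sylvester_eq_coeffMatrix g f hg hf, coeffMatrix_mul]
    congr 1
    ext1 k
    induction k using Fin.addCases with
    | left k => simp [Fin.sum_univ_add, coeffMatrix, expand]
    | right k => simp [Fin.sum_univ_add, Matrix.one_apply]
  rw [factor, Matrix.det_mul, Matrix.det_reindex_self, Matrix.det_fromBlocks_zero₂₁,
    Matrix.det_one, mul_one, Polynomial.resultant]

lemma det_coeffMatrix_X_pow_mul_sum {m n : ℕ} (q : Fin m → R[X])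
    (A : Matrix (Fin m) (Fin m) R) :
    (coeffMatrix (m * n) fun j : Fin (m * n) =>
      Polynomial.X ^ (j.modNat : ℕ) * ∑ i, A i j.divNat • q i).det =
      (coeffMatrix (m * n) fun j : Fin (m * n) =>
        Polynomial.X ^ (j.modNat : ℕ) * q j.divNat).det * A.det ^ n := by
  rw [coeffMatrix_X_pow_mul_sum, Matrix.det_mul, Matrix.det_reindex_self, Matrix.det_kronecker,
    Matrix.det_one, one_pow, mul_one, Fintype.card_fin]

end CoeffMatrix

section Resultant

variable {R : Type*} [CommRing R]

lemma resultant_mul_left_of_natDegree_le {f₁ f₂ g : R[X]} {m₁ m₂ n : ℕ}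
    (h₁ : f₁.natDegree ≤ m₁) (h₂ : f₂.natDegree ≤ m₂) (hg : g.natDegree ≤ n) :
    (f₁ * f₂).resultant g (m₁ + m₂) n = f₁.resultant g m₁ n * f₂.resultant g m₂ n := by
  obtain ⟨k₁, rfl⟩ := Nat.exists_eq_add_of_le h₁
  obtain ⟨k₂, rfl⟩ := Nat.exists_eq_add_of_le h₂
  rw [add_add_add_comm, Polynomial.resultant_add_left_deg _ _ _ _ _ Polynomial.natDegree_mul_le,
    Polynomial.resultant_mul_left _ _ _ _ hg, Polynomial.resultant_add_left_deg _ _ _ _ _ le_rfl,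
    Polynomial.resultant_add_left_deg _ _ _ _ _ le_rfl]
  ring

lemma resultant_pow_left_of_natDegree_le {f g : R[X]} {m n : ℕ}
    (hf : f.natDegree ≤ m) (hg : g.natDegree ≤ n) (k : ℕ) :
    (f ^ k).resultant g (k * m) n = f.resultant g m n ^ k := by
  induction k with
  | zero => simp
  | succ k ih =>
    rw [pow_succ, Nat.succ_mul, resultant_mul_left_of_natDegree_le
      (Polynomial.natDegree_pow_le_of_le k hf) hf hg, ih, pow_succ]

lemma resultant_two_two (f g : R[X]) :
    f.resultant g 2 2 = (f.coeff 0 * g.coeff 2 - f.coeff 2 * g.coeff 0) ^ 2 -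
      (f.coeff 0 * g.coeff 1 - f.coeff 1 * g.coeff 0) *
        (f.coeff 1 * g.coeff 2 - f.coeff 2 * g.coeff 1) := by
  have sylvester_two_two : f.sylvester g 2 2 =
      !![g.coeff 0, 0, f.coeff 0, 0;
        g.coeff 1, g.coeff 0, f.coeff 1, f.coeff 0;
        g.coeff 2, g.coeff 1, f.coeff 2, f.coeff 1;
        0, g.coeff 2, 0, f.coeff 2] := by
    ext i j
    fin_cases i <;> fin_cases j <;> simp [Polynomial.sylvester, Fin.addCases]
  rw [Polynomial.resultant, sylvester_two_two]
  simp [Matrix.det_succ_row_zero, Fin.sum_univ_succ, Fin.succAbove]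
  ring

end Resultant

section ShiftedPowers

/-- The family `X^b * (f^(m-1-a) * g^a)` with `a < m` and `b < n`, enumerated by `j = n * a + b`.
It is indexed by `ℕ` rather than `Fin (m * n)` so that no casts between `Fin ((m + 1) * n)` and
`Fin (m * n + n)` arise. -/
def shiftedPowers {R : Type*} [Semiring R] (f g : R[X]) (m n j : ℕ) : R[X] :=
  Polynomial.X ^ (j % n) * (f ^ (m - 1 - j / n) * g ^ (j / n))

lemma degree_shiftedPowers_lt {R : Type*} [Semiring R] {f g : R[X]} {m n j : ℕ}
    (hf : f.natDegree ≤ n) (hg : g.natDegree ≤ n) (hj : j < m * n) :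
    (shiftedPowers f g m n j).degree < ↑(m * n) := by
  have natDegree_le : (shiftedPowers f g m n j).natDegree ≤
      j % n + ((m - 1 - j / n) * n + j / n * n) :=
    Polynomial.natDegree_mul_le_of_le (Polynomial.natDegree_X_pow_le _)
      (Polynomial.natDegree_mul_le_of_le (Polynomial.natDegree_pow_le_of_le _ hf)
        (Polynomial.natDegree_pow_le_of_le _ hg))
  have mod_lt : j % n < n := Nat.mod_lt j (Nat.pos_of_lt_mul_left hj)
  have blocks : m - 1 - j / n + j / n + 1 = m := by
    have : j / n < m := Nat.div_lt_of_lt_mul (by rwa [mul_comm])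
    omega
  refine (Polynomial.degree_le_of_natDegree_le natDegree_le).trans_lt (Nat.cast_lt.2 ?_)
  calc j % n + ((m - 1 - j / n) * n + j / n * n)
      < n + ((m - 1 - j / n) * n + j / n * n) := by gcongr
    _ = (m - 1 - j / n + j / n + 1) * n := by ring
    _ = m * n := by rw [blocks]

lemma shiftedPowers_succ_eq_append {R : Type*} [CommSemiring R] (f g : R[X]) (m n : ℕ) :
    (fun j : Fin (m * n + n) => shiftedPowers f g (m + 1) n j) =
      Fin.append (fun j : Fin (m * n) => f * shiftedPowers f g m n j)
        (fun j : Fin n => Polynomial.X ^ (j : ℕ) * g ^ m) := by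
  ext1 j
  induction j using Fin.addCases with
  | left j =>
    have exponent : m + 1 - 1 - (j / n : ℕ) = m - 1 - j / n + 1 := by
      have : (j / n : ℕ) < m := j.divNat.2
      omega
    rw [Fin.append_left, Fin.val_castAdd, shiftedPowers, shiftedPowers, exponent]
    ring
  | right j =>
    simp [shiftedPowers, Nat.mod_eq_of_lt, Nat.div_eq_of_lt, Nat.add_div_of_dvd_right, j.pos]

theorem det_coeffMatrix_shiftedPowers {R : Type*} [CommRing R] {f g : R[X]} {n : ℕ}
    (hf : f.natDegree ≤ n) (hg : g.natDegree ≤ n) (m : ℕ) :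
    (coeffMatrix (m * n) fun j : Fin (m * n) => shiftedPowers f g m n j).det =
      g.resultant f n n ^ m.choose 2 := by
  induction m with
  | zero => rw [Matrix.det_eq_one_of_card_eq_zero (by simp), Nat.choose_zero_succ, pow_zero]
  | succ m ih =>
    rw [Nat.succ_mul, shiftedPowers_succ_eq_append,
      det_coeffMatrix_append f (g ^ m) hf (Polynomial.natDegree_pow_le_of_le m hg) _
        fun j => degree_shiftedPowers_lt hf hg j.2,
      ih, resultant_pow_left_of_natDegree_le hg hf, ← pow_add, Nat.choose_succ_succ' m 1,
      Nat.choose_one_right]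

end ShiftedPowers

section BinaryForm

variable {R : Type*} [CommSemiring R]

/-- The dehomogenization `P(1, X)` of a binary form `P(u, v)`; the variable `v` is kept so that
the coefficient of `u^(d - i) v^i` becomes that of `X^i`. -/
def dehomogenize : MvPolynomial (Fin 2) R →ₐ[R] R[X] :=
  aeval ![1, Polynomial.X]

lemma coeff_dehomogenize {P : MvPolynomial (Fin 2) R} {d i : ℕ} (hP : P.IsHomogeneous d)
    (hi : i ≤ d) :
    (dehomogenize P).coeff i = coeff (Finsupp.single 0 (d - i) + Finsupp.single 1 i) P := by
  have monomials : dehomogenize P =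
      ∑ s ∈ P.support, Polynomial.C (coeff s P) * Polynomial.X ^ s 1 := by
    simp [dehomogenize, aeval_def, eval₂_eq']
  have exponent_eq {s : Fin 2 →₀ ℕ} (hs : s ∈ P.support) (his : i = s 1) :
      s = Finsupp.single 0 (d - i) + Finsupp.single 1 i := by
    have degree_eq : s 0 + s 1 = d := by
      rw [← Fin.sum_univ_two, ← Finsupp.degree_eq_sum]
      by_contra hne
      exact mem_support_iff.1 hs (hP.coeff_eq_zero hne)
    ext t
    fin_cases t <;> simp <;> omega
  simp only [monomials, Polynomial.finsetSum_coeff, Polynomial.coeff_C_mul_X_pow]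
  rw [Finset.sum_eq_single (Finsupp.single 0 (d - i) + Finsupp.single 1 i)]
  · simp
  · intro s hs hne
    exact if_neg fun his => hne (exponent_eq hs his)
  · intro hs
    rw [notMem_support_iff.1 hs, ite_self]

lemma natDegree_dehomogenize_le {P : MvPolynomial (Fin 2) R} {d : ℕ} (hP : P.IsHomogeneous d) :
    (dehomogenize P).natDegree ≤ d := by
  refine (aeval_natDegree_le P hP.totalDegree_le _ fun i => ?_).trans_eq (mul_one d)
  fin_cases i <;> simp [Polynomial.natDegree_X_le]

/-- The matrix `A_{P₁,…,Pₘ}` of `m` binary forms of degree `(m - 1) * n`: its columns are the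
coefficient vectors of `u^(n-1) P₁, …, v^(n-1) P₁, u^(n-1) P₂, …, v^(n-1) Pₘ` with respect to the
monomials `u^(mn-1), …, v^(mn-1)`. -/
def shiftMatrix (n : ℕ) {m : ℕ} (P : Fin m → MvPolynomial (Fin 2) R) :
    Matrix (Fin (m * n)) (Fin (m * n)) R :=
  Matrix.of fun i j =>
    coeff (Finsupp.single 0 (m * n - 1 - i : ℕ) + Finsupp.single 1 (i : ℕ))
      (X 0 ^ (n - 1 - j.modNat : ℕ) * X 1 ^ (j.modNat : ℕ) * P j.divNat)

lemma shiftMatrix_eq_coeffMatrix {m n : ℕ} {P : Fin m → MvPolynomial (Fin 2) R}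
    (hP : ∀ a, (P a).IsHomogeneous ((m - 1) * n)) :
    shiftMatrix n P = coeffMatrix (m * n) fun j : Fin (m * n) =>
      Polynomial.X ^ (j.modNat : ℕ) * dehomogenize (P j.divNat) := by
  ext i j
  have degree_eq : n - 1 - j.modNat + j.modNat + (m - 1) * n = m * n - 1 := by
    have hm : (m - 1 + 1) * n = m * n := by rw [Nat.sub_add_cancel j.divNat.pos]
    have := j.modNat.2
    rw [← hm, Nat.succ_mul]
    omega
  have homogeneous := ((isHomogeneous_X_pow (R := R) (0 : Fin 2) (n - 1 - j.modNat)).mul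
    (isHomogeneous_X_pow 1 j.modNat)).mul (hP j.divNat)
  rw [degree_eq] at homogeneous
  rw [shiftMatrix, Matrix.of_apply, ← coeff_dehomogenize homogeneous (Nat.le_sub_one_of_lt i.2)]
  simp [coeffMatrix, dehomogenize]

end BinaryForm

lemma Amat_eq_shiftMatrix {k : Type*} [Field k] (P : Fin 3 → MvPolynomial (Fin 2) k) :
    Amat (P 0) (P 1) (P 2) = shiftMatrix 2 P := by
  ext i j
  fin_cases j <;> simp [Amat, shiftMatrix, coeffUV, Fin.modNat, Fin.divNat]

lemma Res2_eq_resultant {k : Type*} [Field k] {Q₁ Q₂ : MvPolynomial (Fin 2) k}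
    (h₁ : Q₁.IsHomogeneous 2) (h₂ : Q₂.IsHomogeneous 2) :
    Res2 Q₁ Q₂ = (dehomogenize Q₂).resultant (dehomogenize Q₁) 2 2 := by
  simp only [Res2, coeffUV, resultant_two_two, coeff_dehomogenize h₁, coeff_dehomogenize h₂,
    zero_le, Nat.one_le_ofNat, le_refl, tsub_zero, Nat.reduceSub]
  ring

-- Mathlib's Sylvester matrix puts the shifts of its second argument first, so taking the
-- resultant in the order `Q₂`, `Q₁` avoids a sign.
theorem stmt4_general {R : Type*} [CommRing R] {m n : ℕ} {Q₁ Q₂ : MvPolynomial (Fin 2) R}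
    (h₁ : Q₁.IsHomogeneous n) (h₂ : Q₂.IsHomogeneous n) (N : Matrix (Fin m) (Fin m) R) :
    (shiftMatrix n fun j => ∑ i : Fin m, N i j • (Q₁ ^ (m - 1 - i : ℕ) * Q₂ ^ (i : ℕ))).det =
      (dehomogenize Q₂).resultant (dehomogenize Q₁) n n ^ m.choose 2 * N.det ^ n := by
  have homogeneous (j : Fin m) :
      (∑ i : Fin m, N i j • (Q₁ ^ (m - 1 - i : ℕ) * Q₂ ^ (i : ℕ))).IsHomogeneous
        ((m - 1) * n) := by
    refine IsHomogeneous.sum _ _ _ fun i _ => ?_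
    have degree_eq : n * (m - 1 - i) + n * i = (m - 1) * n := by
      rw [← mul_add, Nat.sub_add_cancel (Nat.le_sub_one_of_lt i.2), mul_comm]
    rw [smul_eq_C_mul, ← degree_eq]
    exact ((h₁.pow _).mul (h₂.pow _)).C_mul _
  rw [shiftMatrix_eq_coeffMatrix homogeneous]
  simp only [map_sum, map_smul, map_mul, map_pow]
  rw [det_coeffMatrix_X_pow_mul_sum (fun i : Fin m =>
    dehomogenize Q₁ ^ (m - 1 - i : ℕ) * dehomogenize Q₂ ^ (i : ℕ)) N]
  exact congrArg (· * N.det ^ n) <| det_coeffMatrix_shiftedPowers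
    (natDegree_dehomogenize_le h₁) (natDegree_dehomogenize_le h₂) m

/-- degree-2 cover of a conic: for homogeneous degree-2 polynomials
`Q₁, Q₂` in `k[u,v]` and quadratic forms `Rᵢ(s,t) = e₂ᵢs² + e₁ᵢst + e₀ᵢt²`, setting
`Pᵢ = Rᵢ(Q₁,Q₂)` and letting `N` be the `3×3` matrix with `i`-th column `(e₂ᵢ, e₁ᵢ, e₀ᵢ)ᵀ`,
one has `det A_{P₁,P₂,P₃} = Res(Q₁,Q₂)³ · (det N)²`. -/
theorem stmt4 {k : Type*} [Field k] (Q₁ Q₂ : MvPolynomial (Fin 2) k)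
    (h₁ : Q₁.IsHomogeneous 2) (h₂ : Q₂.IsHomogeneous 2)
    (e₂ e₁ e₀ : Fin 3 → k) :
    (Amat (C (e₂ 0) * Q₁ ^ 2 + C (e₁ 0) * (Q₁ * Q₂) + C (e₀ 0) * Q₂ ^ 2)
        (C (e₂ 1) * Q₁ ^ 2 + C (e₁ 1) * (Q₁ * Q₂) + C (e₀ 1) * Q₂ ^ 2)
        (C (e₂ 2) * Q₁ ^ 2 + C (e₁ 2) * (Q₁ * Q₂) + C (e₀ 2) * Q₂ ^ 2)).det =
      Res2 Q₁ Q₂ ^ 3 * (Matrix.of ![e₂, e₁, e₀] : Matrix (Fin 3) (Fin 3) k).det ^ 2 := by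
  simpa [← Amat_eq_shiftMatrix, Res2_eq_resultant h₁ h₂, Fin.sum_univ_three, smul_eq_C_mul] using
    stmt4_general h₁ h₂ (Matrix.of ![e₂, e₁, e₀])
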